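/- Let γ be an affinely parametrized null geodesic of the warped product g = ĝ + f² ḡ with tangent N^μ = (N̂^a, N̄^i), and let C ≥ 0 be the constant with ḡ_{ij} N̄^i N̄^j = C/f⁴. Then the base projection satisfies the subgeodesic equation N̂^b ∇̂_b N̂^a = −(ĝ_{bc} N̂^b N̂^c) ∇̂^a(ln f) = (C/f³) ∇̂^a f = −(C/2) ∇̂^a(1/f²), and its tangent satisfies the first integral ĝ_{ab} N̂^a N̂^b = −C/f². -/

import Mathlib

open Filter MeasureTheory
open scoped BigOperators Topology

noncomputable section

namespace Paper

variable {ι : Type*} [Fintype ι] [DecidableEq ι]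
variable {κ : Type*} [Fintype κ] [DecidableEq κ]

/-- Coordinate partial derivative of a scalar field in the direction `ρ`. -/
def pd (h : (ι → ℝ) → ℝ) (ρ : ι) (x : ι → ℝ) : ℝ :=
  fderiv ℝ h x (Pi.single ρ 1)

/-- The inverse metric. -/
def ginv (g : (ι → ℝ) → Matrix ι ι ℝ) (x : ι → ℝ) : Matrix ι ι ℝ :=
  (g x)⁻¹

/-- Christoffel symbols `Γ^μ_{ρσ} = ½ g^{μν}(∂_ρ g_{νσ} + ∂_σ g_{νρ} − ∂_ν g_{ρσ})`. -/
def Γc (g : (ι → ℝ) → Matrix ι ι ℝ) (μ ρ σ : ι) (x : ι → ℝ) : ℝ :=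
  (1 / 2) * ∑ ν, ginv g x μ ν *
    (pd (fun y => g y ν σ) ρ x + pd (fun y => g y ν ρ) σ x - pd (fun y => g y ρ σ) ν x)

/-- Riemann curvature tensor `R^α_{βμν}`. -/
def Riem (g : (ι → ℝ) → Matrix ι ι ℝ) (α β μ ν : ι) (x : ι → ℝ) : ℝ :=
  pd (Γc g α ν β) μ x - pd (Γc g α μ β) ν x
    + ∑ lam, Γc g α μ lam x * Γc g lam ν β x
    - ∑ lam, Γc g α ν lam x * Γc g lam μ β x

/-- Riemann tensor with the first index lowered, `R_{μνρσ} = g_{μλ} R^λ_{νρσ}`. -/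
def RiemLow (g : (ι → ℝ) → Matrix ι ι ℝ) (μ ν ρ σ : ι) (x : ι → ℝ) : ℝ :=
  ∑ lam, g x μ lam * Riem g lam ν ρ σ x

/-- Ricci tensor `R_{μν} = R^ρ_{μρν}`. -/
def Ric (g : (ι → ℝ) → Matrix ι ι ℝ) (μ ν : ι) (x : ι → ℝ) : ℝ :=
  ∑ ρ, Riem g ρ μ ρ ν x

/-- Scalar product of two vectors with respect to the metric at `x`. -/
def sq (g : (ι → ℝ) → Matrix ι ι ℝ) (x : ι → ℝ) (v w : ι → ℝ) : ℝ :=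
  ∑ μ, ∑ ν, g x μ ν * v μ * w ν

/-- Velocity (tangent vector field) of a parametrized curve. -/
def vel (γ : ℝ → ι → ℝ) (u : ℝ) : ι → ℝ :=
  fun μ => deriv (fun w => γ w μ) u

/-- Covariant derivative, along the curve `γ`, of a vector field `V` given along `γ`. -/
def covD (g : (ι → ℝ) → Matrix ι ι ℝ) (γ V : ℝ → ι → ℝ) (u : ℝ) (μ : ι) : ℝ :=
  deriv (fun w => V w μ) u + ∑ ρ, ∑ σ, Γc g μ ρ σ (γ u) * vel γ u ρ * V u σ

/-- The (affinely parametrized) geodesic equation at parameter value `u`. -/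
def GeodesicAt (g : (ι → ℝ) → Matrix ι ι ℝ) (γ : ℝ → ι → ℝ) (u : ℝ) : Prop :=
  ∀ μ, covD g γ (vel γ) u μ = 0

/-- `γ` is an affinely parametrized geodesic of `g`. -/
def IsGeodesic (g : (ι → ℝ) → Matrix ι ι ℝ) (γ : ℝ → ι → ℝ) : Prop :=
  ∀ u, GeodesicAt g γ u

/-- `E` is parallelly transported along `γ`. -/
def IsParallel (g : (ι → ℝ) → Matrix ι ι ℝ) (γ E : ℝ → ι → ℝ) : Prop :=
  ∀ u μ, covD g γ E u μ = 0

def SmoothCurve (γ : ℝ → ι → ℝ) : Prop :=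
  ∀ μ, ContDiff ℝ (⊤ : ℕ∞) fun u => γ u μ

/-- A smooth symmetric everywhere-nondegenerate metric. -/
def SmoothMetric (g : (ι → ℝ) → Matrix ι ι ℝ) : Prop :=
  (∀ μ ν, ContDiff ℝ (⊤ : ℕ∞) fun x => g x μ ν) ∧
    (∀ x μ ν, g x μ ν = g x ν μ) ∧ ∀ x, IsUnit (g x).det

/-- Lorentzian signature `(−,+,…,+)`: there is a timelike vector whose `g`-orthogonal
complement is positive definite. -/
def Lorentzian (g : (ι → ℝ) → Matrix ι ι ℝ) : Prop :=
  SmoothMetric g ∧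
    ∀ x, ∃ t : ι → ℝ, sq g x t t < 0 ∧ ∀ v : ι → ℝ, sq g x t v = 0 → v ≠ 0 → 0 < sq g x v v

/-- Riemannian (positive definite) metric. -/
def Riemannian (g : (ι → ℝ) → Matrix ι ι ℝ) : Prop :=
  SmoothMetric g ∧ ∀ x, ∀ v : ι → ℝ, v ≠ 0 → 0 < sq g x v v

def NullVec (g : (ι → ℝ) → Matrix ι ι ℝ) (x v : ι → ℝ) : Prop :=
  sq g x v v = 0 ∧ v ≠ 0

/-- A time orientation: an everywhere timelike vector field. -/
def TimeOrientation (g : (ι → ℝ) → Matrix ι ι ℝ) (T : (ι → ℝ) → ι → ℝ) : Prop :=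
  ∀ x, sq g x (T x) (T x) < 0

/-- `v` is a future-pointing causal vector at `x` (wrt the time orientation `T`). -/
def FutureCausal (g : (ι → ℝ) → Matrix ι ι ℝ) (T : (ι → ℝ) → ι → ℝ) (x v : ι → ℝ) : Prop :=
  sq g x v v ≤ 0 ∧ v ≠ 0 ∧ sq g x (T x) v < 0

/-- `S` is met exactly once by every inextendible future-directed causal curve
(inextendibility being encoded by parametrization by Euclidean arclength on all of `ℝ`). -/
def IsCauchySurface (g : (ι → ℝ) → Matrix ι ι ℝ) (T : (ι → ℝ) → ι → ℝ)
    (S : Set (ι → ℝ)) : Prop :=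
  ∀ γ : ℝ → ι → ℝ, (∀ μ, Differentiable ℝ fun u => γ u μ) →
    (∀ u, FutureCausal g T (γ u) (vel γ u)) →
    (∀ u, ∑ μ, (vel γ u μ) ^ 2 = 1) → ∃! u, γ u ∈ S

/-- `g`-gradient vector of a scalar function. -/
def gradVec (g : (ι → ℝ) → Matrix ι ι ℝ) (τ : (ι → ℝ) → ℝ) (x : ι → ℝ) : ι → ℝ :=
  fun μ => ∑ ν, ginv g x μ ν * pd τ ν x

/-- Existence of a non-compact (spacelike) Cauchy hypersurface, encoded as a regular
level set of a smooth function with timelike gradient. -/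
def HasNoncompactCauchySurface (g : (ι → ℝ) → Matrix ι ι ℝ)
    (T : (ι → ℝ) → ι → ℝ) : Prop :=
  ∃ τ : (ι → ℝ) → ℝ, ContDiff ℝ (⊤ : ℕ∞) τ ∧ ¬ IsCompact {x | τ x = 0} ∧
    (∀ x, τ x = 0 → sq g x (gradVec g τ x) (gradVec g τ x) < 0) ∧
    IsCauchySurface g T {x | τ x = 0}

/-- Null geodesic completeness: every null initial datum extends to a geodesic
defined for all values of the affine parameter. -/
def NullComplete (g : (ι → ℝ) → Matrix ι ι ℝ) : Prop :=
  ∀ x v : ι → ℝ, NullVec g x v →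
    ∃ γ : ℝ → ι → ℝ, SmoothCurve γ ∧ γ 0 = x ∧ vel γ 0 = v ∧ IsGeodesic g γ

/-- Future null geodesic completeness. -/
def FutureNullComplete (g : (ι → ℝ) → Matrix ι ι ℝ) (T : (ι → ℝ) → ι → ℝ) : Prop :=
  ∀ x v : ι → ℝ, NullVec g x v → FutureCausal g T x v →
    ∃ γ : ℝ → ι → ℝ, SmoothCurve γ ∧ γ 0 = x ∧ vel γ 0 = v ∧
      ∀ u, 0 ≤ u → GeodesicAt g γ u

/-! ### Submanifolds given implicitly as regular zero sets -/

/-- Differential (lowered normal covectors) of the defining map `F`. -/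
def dFm (F : (ι → ℝ) → κ → ℝ) (α : κ) (μ : ι) (x : ι → ℝ) : ℝ :=
  pd (fun y => F y α) μ x

/-- The normal vectors `ν_α = grad F^α` spanning the normal space. -/
def normalBasis (g : (ι → ℝ) → Matrix ι ι ℝ) (F : (ι → ℝ) → κ → ℝ) (α : κ)
    (x : ι → ℝ) : ι → ℝ :=
  fun μ => ∑ ν, ginv g x μ ν * dFm F α ν x

/-- Gram matrix `W_{αβ} = g(ν_α, ν_β)` of the normals. -/
def gram (g : (ι → ℝ) → Matrix ι ι ℝ) (F : (ι → ℝ) → κ → ℝ) (x : ι → ℝ) :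
    Matrix κ κ ℝ :=
  Matrix.of fun α β => ∑ μ, dFm F α μ x * normalBasis g F β x μ

/-- The (contravariant) orthogonal projector onto the tangent space of `{F = 0}`. -/
def tanProj (g : (ι → ℝ) → Matrix ι ι ℝ) (F : (ι → ℝ) → κ → ℝ) (x : ι → ℝ)
    (μ ν : ι) : ℝ :=
  ginv g x μ ν -
    ∑ α, ∑ β, (gram g F x)⁻¹ α β * normalBasis g F α x μ * normalBasis g F β x ν

/-- Covariant Hessian `∇_μ ∇_ν F^α`. -/
def hessF (g : (ι → ℝ) → Matrix ι ι ℝ) (F : (ι → ℝ) → κ → ℝ) (α : κ) (μ ν : ι)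
    (x : ι → ℝ) : ℝ :=
  pd (fun y => dFm F α ν y) μ x - ∑ lam, Γc g lam μ ν x * dFm F α lam x

/-- The expansion `θ(n)` of the submanifold `{F = 0}` along the normal
`n = ∑ c_α ν_α`, namely `θ(n) = ∑_α c_α h^{μν} ∇_μ∇_ν F^α`. -/
def expansionCoeff (g : (ι → ℝ) → Matrix ι ι ℝ) (F : (ι → ℝ) → κ → ℝ) (x : ι → ℝ)
    (c : κ → ℝ) : ℝ :=
  ∑ α, c α * ∑ μ, ∑ ν, tanProj g F x μ ν * hessF g F α μ ν x

/-- `v` is tangent to the level set `{F = 0}` at `x`. -/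
def TangentTo (F : (ι → ℝ) → κ → ℝ) (x v : ι → ℝ) : Prop :=
  ∀ α, ∑ μ, dFm F α μ x * v μ = 0

/-- The normal vector with components `c` in the basis of normals. -/
def NormalComb (g : (ι → ℝ) → Matrix ι ι ℝ) (F : (ι → ℝ) → κ → ℝ) (x : ι → ℝ)
    (c : κ → ℝ) : ι → ℝ :=
  fun μ => ∑ α, c α * normalBasis g F α x μ

/-- A closed (compact without boundary) spacelike submanifold, given as the regular
zero set of the smooth map `F`, of co-dimension `card κ`. -/
def ClosedSpacelikeSubmanifold (g : (ι → ℝ) → Matrix ι ι ℝ)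
    (F : (ι → ℝ) → κ → ℝ) : Prop :=
  (∀ α, ContDiff ℝ (⊤ : ℕ∞) fun x => F x α) ∧
    IsCompact {x | ∀ α, F x α = 0} ∧ {x | ∀ α, F x α = 0}.Nonempty ∧
    (∀ x, (∀ α, F x α = 0) → IsUnit (gram g F x).det) ∧
    (∀ x, (∀ α, F x α = 0) → ∀ v, TangentTo F x v → v ≠ 0 → 0 < sq g x v v)

/-- Future-trapped: every future-pointing causal normal has negative expansion. -/
def FutureTrapped (g : (ι → ℝ) → Matrix ι ι ℝ) (T : (ι → ℝ) → ι → ℝ)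
    (F : (ι → ℝ) → κ → ℝ) : Prop :=
  ∀ x, (∀ α, F x α = 0) → ∀ c : κ → ℝ,
    FutureCausal g T x (NormalComb g F x c) → expansionCoeff g F x c < 0

/-! ### Warped products -/

def basePt {d₁ d₂ : ℕ} (x : (Fin d₁ ⊕ Fin d₂) → ℝ) : Fin d₁ → ℝ :=
  fun a => x (Sum.inl a)

def fibPt {d₁ d₂ : ℕ} (x : (Fin d₁ ⊕ Fin d₂) → ℝ) : Fin d₂ → ℝ :=
  fun i => x (Sum.inr i)

/-- The warped product metric `g = ĝ + f² ḡ` in adapted coordinates. -/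
def warped {d₁ d₂ : ℕ} (gB : (Fin d₁ → ℝ) → Matrix (Fin d₁) (Fin d₁) ℝ)
    (gF : (Fin d₂ → ℝ) → Matrix (Fin d₂) (Fin d₂) ℝ) (f : (Fin d₁ → ℝ) → ℝ) :
    ((Fin d₁ ⊕ Fin d₂) → ℝ) → Matrix (Fin d₁ ⊕ Fin d₂) (Fin d₁ ⊕ Fin d₂) ℝ :=
  fun x => Matrix.of fun μ ν =>
    match μ, ν with
    | Sum.inl a, Sum.inl b => gB (basePt x) a b
    | Sum.inl _, Sum.inr _ => 0
    | Sum.inr _, Sum.inl _ => 0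
    | Sum.inr i, Sum.inr j => (f (basePt x)) ^ 2 * gF (fibPt x) i j

/-- Projection of a spacetime curve to the base. -/
def baseCurve {d₁ d₂ : ℕ} (γ : ℝ → (Fin d₁ ⊕ Fin d₂) → ℝ) : ℝ → Fin d₁ → ℝ :=
  fun u => basePt (γ u)

/-- Projection of a spacetime curve to the fiber. -/
def fibCurve {d₁ d₂ : ℕ} (γ : ℝ → (Fin d₁ ⊕ Fin d₂) → ℝ) : ℝ → Fin d₂ → ℝ :=
  fun u => fibPt (γ u)

/-- Lift of a base vector to the warped product (vanishing fiber components). -/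
def liftVec {d₁ d₂ : ℕ} (v : Fin d₁ → ℝ) : (Fin d₁ ⊕ Fin d₂) → ℝ :=
  fun μ => match μ with
  | Sum.inl a => v a
  | Sum.inr _ => 0

/-- Lift of a base vector field (e.g. a time orientation) to the warped product. -/
def liftT {d₁ d₂ : ℕ} (T : (Fin d₁ → ℝ) → Fin d₁ → ℝ) :
    ((Fin d₁ ⊕ Fin d₂) → ℝ) → (Fin d₁ ⊕ Fin d₂) → ℝ :=
  fun x => liftVec (T (basePt x))

/-- Defining map of the lift `ζ_p ⊆ Y_p` of the submanifold `{Fb = 0} ⊆ Y`. -/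
def liftF {d₁ d₂ m' : ℕ} (p : Fin d₁ → ℝ) (Fb : (Fin d₂ → ℝ) → Fin m' → ℝ) :
    ((Fin d₁ ⊕ Fin d₂) → ℝ) → (Fin d₁ ⊕ Fin m') → ℝ :=
  fun x α => match α with
  | Sum.inl a => x (Sum.inl a) - p a
  | Sum.inr β => Fb (fibPt x) β

/-- Covariant Hessian `∇_μ∇_ν f` of a scalar function. -/
def hess (g : (ι → ℝ) → Matrix ι ι ℝ) (f : (ι → ℝ) → ℝ) (μ ν : ι) (x : ι → ℝ) : ℝ :=
  pd (fun y => pd f ν y) μ x - ∑ lam, Γc g lam μ ν x * pd f lam x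

/-- `∇^μ f ∇_μ f`. -/
def gradSq (g : (ι → ℝ) → Matrix ι ι ℝ) (f : (ι → ℝ) → ℝ) (x : ι → ℝ) : ℝ :=
  ∑ μ, ∑ ν, ginv g x μ ν * pd f μ x * pd f ν x

/-! ### Parametrized submanifolds and their expansions -/

/-- Partial derivative of a parametrization `φ`. -/
def dpar {k : ℕ} (φ : (Fin k → ℝ) → ι → ℝ) (A : Fin k) (μ : ι)
    (y : Fin k → ℝ) : ℝ :=
  fderiv ℝ (fun z => φ z μ) y (Pi.single A 1)

/-- First fundamental form of a parametrized submanifold. -/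
def firstFF {k : ℕ} (g : (ι → ℝ) → Matrix ι ι ℝ) (φ : (Fin k → ℝ) → ι → ℝ)
    (y : Fin k → ℝ) : Matrix (Fin k) (Fin k) ℝ :=
  Matrix.of fun A B => ∑ μ, ∑ ν, g (φ y) μ ν * dpar φ A μ y * dpar φ B ν y

/-- The expansion `θ(n) = n_μ H^μ` of a parametrized submanifold along a normal `n`,
via `θ(n) = −γ^{AB} n_μ (∂_A∂_B φ^μ + Γ^μ_{ρσ} ∂_A φ^ρ ∂_B φ^σ)`. -/
def expansionPar {k : ℕ} (g : (ι → ℝ) → Matrix ι ι ℝ) (φ : (Fin k → ℝ) → ι → ℝ)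
    (y : Fin k → ℝ) (n : ι → ℝ) : ℝ :=
  - ∑ A, ∑ B, (firstFF g φ y)⁻¹ A B *
      ∑ μ, (∑ ν, g (φ y) μ ν * n ν) *
        (fderiv ℝ (fun z => dpar φ B μ z) y (Pi.single A 1)
          + ∑ ρ, ∑ σ, Γc g μ ρ σ (φ y) * dpar φ A ρ y * dpar φ B σ y)

/-! For a base index `a`, the only Christoffel symbols `Γ^a_{ρσ}` of `g = ĝ + f² ḡ` that need not
vanish are `Γ̂^a_{bc}` and `Γ^a_{ij} = -f ∇̂^a f ḡ_{ij}`. The base component of the geodesic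
equation is therefore `N̂^b ∇̂_b N̂^a = f ḡ(N̄, N̄) ∇̂^a f`, while nullity says
`ĝ(N̂, N̂) = -f² ḡ(N̄, N̄)`. Inserting `ḡ(N̄, N̄) = C / f⁴`, the three forms of the subgeodesic
equation differ by the chain rule for `ln f` and `1 / f²`. -/

section Calculus

variable {α β : Type*} [DecidableEq α]

lemma pd_const (c : ℝ) (ρ : α) (x : α → ℝ) : pd (fun _ => c) ρ x = 0 := by
  simp [pd]

variable [Finite α]

lemma pd_mul {h k : (α → ℝ) → ℝ} {x : α → ℝ} (hh : DifferentiableAt ℝ h x)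
    (hk : DifferentiableAt ℝ k x) (ρ : α) :
    pd (fun y => h y * k y) ρ x = pd h ρ x * k x + h x * pd k ρ x := by
  cases nonempty_fintype α
  simp only [pd, fderiv_fun_mul hh hk, add_apply, smul_apply, smul_eq_mul]
  ring

lemma pd_comp_of_hasDerivAt {φ : ℝ → ℝ} {φ' : ℝ} {h : (α → ℝ) → ℝ} {x : α → ℝ}
    (hφ : HasDerivAt φ φ' (h x)) (hh : DifferentiableAt ℝ h x) (ρ : α) :
    pd (fun y => φ (h y)) ρ x = φ' * pd h ρ x := by
  cases nonempty_fintype α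
  have hcomp : HasFDerivAt (fun y => φ (h y)) (φ' • fderiv ℝ h x) x :=
    hφ.comp_hasFDerivAt x hh.hasFDerivAt
  simp [pd, hcomp.fderiv]

lemma pd_comp_reindex [Finite β] (e : β → α) {h : (β → ℝ) → ℝ} {x : α → ℝ}
    (hh : DifferentiableAt ℝ h (x ∘ e)) (ρ : α) :
    pd (fun y => h (y ∘ e)) ρ x = fderiv ℝ h (x ∘ e) (Pi.single ρ 1 ∘ e) := by
  cases nonempty_fintype α
  cases nonempty_fintype β
  have hcomp : HasFDerivAt (fun y : α → ℝ => h (y ∘ e))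
      ((fderiv ℝ h (x ∘ e)).comp (Pi.compRightL ℝ (fun _ => ℝ) e)) x :=
    HasFDerivAt.comp x hh.hasFDerivAt (Pi.compRightL ℝ (fun _ : α => ℝ) e).hasFDerivAt
  rw [pd, hcomp.fderiv]
  rfl

lemma gradVec_comp_of_hasDerivAt {φ : ℝ → ℝ} {φ' : ℝ} {h : (ι → ℝ) → ℝ} {x : ι → ℝ}
    (g : (ι → ℝ) → Matrix ι ι ℝ) (hφ : HasDerivAt φ φ' (h x)) (hh : DifferentiableAt ℝ h x)
    (μ : ι) : gradVec g (fun y => φ (h y)) x μ = φ' * gradVec g h x μ := by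
  simp only [gradVec, pd_comp_of_hasDerivAt hφ hh, Finset.mul_sum]
  exact Finset.sum_congr rfl fun ν _ => by ring

lemma gradVec_log (g : (ι → ℝ) → Matrix ι ι ℝ) {h : (ι → ℝ) → ℝ} {x : ι → ℝ}
    (hh : DifferentiableAt ℝ h x) (hx : h x ≠ 0) (μ : ι) :
    gradVec g (fun y => Real.log (h y)) x μ = (h x)⁻¹ * gradVec g h x μ :=
  gradVec_comp_of_hasDerivAt g (Real.hasDerivAt_log hx) hh μ

lemma gradVec_one_div_sq (g : (ι → ℝ) → Matrix ι ι ℝ) {h : (ι → ℝ) → ℝ} {x : ι → ℝ}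
    (hh : DifferentiableAt ℝ h x) (hx : h x ≠ 0) (μ : ι) :
    gradVec g (fun y => 1 / h y ^ 2) x μ = -2 / h x ^ 3 * gradVec g h x μ := by
  have hderiv : HasDerivAt (fun t : ℝ => 1 / t ^ 2) (-2 / h x ^ 3) (h x) := by
    simp only [one_div]
    refine ((hasDerivAt_pow 2 (h x)).inv (pow_ne_zero 2 hx)).congr_deriv ?_
    field_simp
    ring
  exact gradVec_comp_of_hasDerivAt g hderiv hh μ

lemma SmoothMetric.differentiable {g : (ι → ℝ) → Matrix ι ι ℝ} (hg : SmoothMetric g) (μ ν : ι) :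
    Differentiable ℝ fun x => g x μ ν :=
  (hg.1 μ ν).differentiable (by simp)

end Calculus

section WarpedProduct

variable {d₁ d₂ : ℕ} {x : (Fin d₁ ⊕ Fin d₂) → ℝ}

lemma pd_comp_basePt_inl {h : (Fin d₁ → ℝ) → ℝ} (hh : DifferentiableAt ℝ h (basePt x))
    (a : Fin d₁) :
    pd (fun y : (Fin d₁ ⊕ Fin d₂) → ℝ => h (basePt y)) (Sum.inl a) x = pd h a (basePt x) := by
  have hsingle : (Pi.single (Sum.inl a) 1 : (Fin d₁ ⊕ Fin d₂) → ℝ) ∘ Sum.inl = Pi.single a 1 := by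
    ext b
    simp [Pi.single_apply]
  exact (pd_comp_reindex Sum.inl hh _).trans (by rw [hsingle]; rfl)

lemma pd_comp_basePt_inr {h : (Fin d₁ → ℝ) → ℝ} (hh : DifferentiableAt ℝ h (basePt x))
    (i : Fin d₂) :
    pd (fun y : (Fin d₁ ⊕ Fin d₂) → ℝ => h (basePt y)) (Sum.inr i) x = 0 := by
  have hsingle : (Pi.single (Sum.inr i) 1 : (Fin d₁ ⊕ Fin d₂) → ℝ) ∘ Sum.inl = 0 := by
    ext b
    simp
  exact (pd_comp_reindex Sum.inl hh _).trans (by rw [hsingle, map_zero])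

lemma pd_comp_fibPt_inl {h : (Fin d₂ → ℝ) → ℝ} (hh : DifferentiableAt ℝ h (fibPt x))
    (a : Fin d₁) :
    pd (fun y : (Fin d₁ ⊕ Fin d₂) → ℝ => h (fibPt y)) (Sum.inl a) x = 0 := by
  have hsingle : (Pi.single (Sum.inl a) 1 : (Fin d₁ ⊕ Fin d₂) → ℝ) ∘ Sum.inr = 0 := by
    ext i
    simp
  exact (pd_comp_reindex Sum.inr hh _).trans (by rw [hsingle, map_zero])

lemma differentiableAt_comp_basePt {h : (Fin d₁ → ℝ) → ℝ} (hh : DifferentiableAt ℝ h (basePt x)) :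
    DifferentiableAt ℝ (fun y : (Fin d₁ ⊕ Fin d₂) → ℝ => h (basePt y)) x :=
  hh.comp x (Pi.compRightL ℝ (fun _ => ℝ) Sum.inl).differentiableAt

lemma differentiableAt_comp_fibPt {h : (Fin d₂ → ℝ) → ℝ} (hh : DifferentiableAt ℝ h (fibPt x)) :
    DifferentiableAt ℝ (fun y : (Fin d₁ ⊕ Fin d₂) → ℝ => h (fibPt y)) x :=
  hh.comp x (Pi.compRightL ℝ (fun _ => ℝ) Sum.inr).differentiableAt

lemma pd_sq_basePt_mul_fibPt_inl {f : (Fin d₁ → ℝ) → ℝ} {h : (Fin d₂ → ℝ) → ℝ}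
    (hf : DifferentiableAt ℝ f (basePt x)) (hh : DifferentiableAt ℝ h (fibPt x)) (a : Fin d₁) :
    pd (fun y : (Fin d₁ ⊕ Fin d₂) → ℝ => f (basePt y) ^ 2 * h (fibPt y)) (Sum.inl a) x
      = 2 * f (basePt x) * pd f a (basePt x) * h (fibPt x) := by
  have hpow : HasDerivAt (fun t : ℝ => t ^ 2) (2 * f (basePt x)) (f (basePt x)) := by
    simpa using hasDerivAt_pow 2 (f (basePt x))
  rw [pd_mul ((differentiableAt_comp_basePt hf).fun_pow 2) (differentiableAt_comp_fibPt hh),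
    pd_comp_basePt_inl (hf.fun_pow 2), pd_comp_of_hasDerivAt hpow hf, pd_comp_fibPt_inl hh,
    mul_zero, add_zero]

variable {gB : (Fin d₁ → ℝ) → Matrix (Fin d₁) (Fin d₁) ℝ}
  {gF : (Fin d₂ → ℝ) → Matrix (Fin d₂) (Fin d₂) ℝ} {f : (Fin d₁ → ℝ) → ℝ}

lemma warped_eq_fromBlocks (x : (Fin d₁ ⊕ Fin d₂) → ℝ) :
    warped gB gF f x
      = Matrix.fromBlocks (gB (basePt x)) 0 0 (f (basePt x) ^ 2 • gF (fibPt x)) := by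
  ext (a | i) (b | j) <;> simp [warped]

lemma sq_warped (x v w : (Fin d₁ ⊕ Fin d₂) → ℝ) :
    sq (warped gB gF f) x v w = sq gB (basePt x) (basePt v) (basePt w)
      + f (basePt x) ^ 2 * sq gF (fibPt x) (fibPt v) (fibPt w) := by
  simp [sq, warped, basePt, fibPt, Finset.mul_sum, mul_assoc]

lemma ginv_warped (hB : IsUnit (gB (basePt x)).det) (hF : IsUnit (gF (fibPt x)).det)
    (hf : f (basePt x) ≠ 0) :
    ginv (warped gB gF f) x = Matrix.fromBlocks (ginv gB (basePt x)) 0 0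
      ((f (basePt x) ^ 2)⁻¹ • ginv gF (fibPt x)) := by
  have hf2 : f (basePt x) ^ 2 ≠ 0 := pow_ne_zero 2 hf
  have hfib : IsUnit (f (basePt x) ^ 2 • gF (fibPt x)) := by
    rw [Matrix.isUnit_iff_isUnit_det, Matrix.det_smul]
    exact (hf2.isUnit.pow _).mul hF
  rw [ginv, warped_eq_fromBlocks, Matrix.inv_fromBlocks_zero₁₂_of_isUnit_iff _ _ _
    (iff_of_true ((Matrix.isUnit_iff_isUnit_det _).2 hB) hfib)]
  have hsmul : (f (basePt x) ^ 2 • gF (fibPt x))⁻¹ = (f (basePt x) ^ 2)⁻¹ • (gF (fibPt x))⁻¹ :=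
    Matrix.inv_smul' _ (Units.mk0 _ hf2) hF
  simp [ginv, hsmul]

lemma Γc_warped_inl (hB : IsUnit (gB (basePt x)).det) (hF : IsUnit (gF (fibPt x)).det)
    (hf : f (basePt x) ≠ 0) (a : Fin d₁) (ρ σ : Fin d₁ ⊕ Fin d₂) :
    Γc (warped gB gF f) (Sum.inl a) ρ σ x
      = 1 / 2 * ∑ b, ginv gB (basePt x) a b *
        (pd (fun y => warped gB gF f y (Sum.inl b) σ) ρ x
          + pd (fun y => warped gB gF f y (Sum.inl b) ρ) σ x
          - pd (fun y => warped gB gF f y ρ σ) (Sum.inl b) x) := by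
  simp [Γc, ginv_warped hB hF hf, Fintype.sum_sum_type]

lemma Γc_warped_inl_inl_inl (hB : IsUnit (gB (basePt x)).det) (hF : IsUnit (gF (fibPt x)).det)
    (hf : f (basePt x) ≠ 0) (hBd : ∀ b c, DifferentiableAt ℝ (fun y => gB y b c) (basePt x))
    (a b c : Fin d₁) :
    Γc (warped gB gF f) (Sum.inl a) (Sum.inl b) (Sum.inl c) x = Γc gB a b c (basePt x) := by
  rw [Γc_warped_inl hB hF hf, Γc]
  simp only [warped, Matrix.of_apply, pd_comp_basePt_inl (hBd _ _)]

lemma Γc_warped_inl_inl_inr (hB : IsUnit (gB (basePt x)).det) (hF : IsUnit (gF (fibPt x)).det)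
    (hf : f (basePt x) ≠ 0) (hBd : ∀ b c, DifferentiableAt ℝ (fun y => gB y b c) (basePt x))
    (a b : Fin d₁) (j : Fin d₂) :
    Γc (warped gB gF f) (Sum.inl a) (Sum.inl b) (Sum.inr j) x = 0 := by
  simp [Γc_warped_inl hB hF hf, warped, pd_const, pd_comp_basePt_inr (hBd _ _)]

lemma Γc_warped_inl_inr_inl (hB : IsUnit (gB (basePt x)).det) (hF : IsUnit (gF (fibPt x)).det)
    (hf : f (basePt x) ≠ 0) (hBd : ∀ b c, DifferentiableAt ℝ (fun y => gB y b c) (basePt x))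
    (a b : Fin d₁) (j : Fin d₂) :
    Γc (warped gB gF f) (Sum.inl a) (Sum.inr j) (Sum.inl b) x = 0 := by
  simp [Γc_warped_inl hB hF hf, warped, pd_const, pd_comp_basePt_inr (hBd _ _)]

lemma Γc_warped_inl_inr_inr (hB : IsUnit (gB (basePt x)).det) (hF : IsUnit (gF (fibPt x)).det)
    (hf : f (basePt x) ≠ 0) (hFd : ∀ i j, DifferentiableAt ℝ (fun y => gF y i j) (fibPt x))
    (hfd : DifferentiableAt ℝ f (basePt x)) (a : Fin d₁) (i j : Fin d₂) :
    Γc (warped gB gF f) (Sum.inl a) (Sum.inr i) (Sum.inr j) x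
      = -(f (basePt x) * gradVec gB f (basePt x) a * gF (fibPt x) i j) := by
  simp only [Γc_warped_inl hB hF hf, warped, Matrix.of_apply, pd_const,
    pd_sq_basePt_mul_fibPt_inl hfd (hFd _ _), gradVec, Finset.mul_sum, Finset.sum_mul,
    ← Finset.sum_neg_distrib]
  exact Finset.sum_congr rfl fun b _ => by ring

variable {γ : ℝ → (Fin d₁ ⊕ Fin d₂) → ℝ} {u : ℝ}

/-- `baseCurve V` and `fibCurve V` stand for the base and fiber components of the vector field `V`
along `γ`, which has the same type as a curve. -/
lemma covD_warped_inl (hB : SmoothMetric gB) (hF : SmoothMetric gF)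
    (hfd : DifferentiableAt ℝ f (basePt (γ u))) (hf : f (basePt (γ u)) ≠ 0)
    (V : ℝ → (Fin d₁ ⊕ Fin d₂) → ℝ) (a : Fin d₁) :
    covD (warped gB gF f) γ V u (Sum.inl a)
      = covD gB (baseCurve γ) (baseCurve V) u a
        - f (basePt (γ u)) * sq gF (fibPt (γ u)) (vel (fibCurve γ) u) (fibCurve V u)
          * gradVec gB f (basePt (γ u)) a := by
  have hBu := hB.2.2 (basePt (γ u))
  have hFu := hF.2.2 (fibPt (γ u))
  have hBd b c := (hB.differentiable b c).differentiableAt (x := basePt (γ u))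
  have hFd i j := (hF.differentiable i j).differentiableAt (x := fibPt (γ u))
  simp only [covD, Fintype.sum_sum_type, Γc_warped_inl_inl_inl hBu hFu hf hBd,
    Γc_warped_inl_inl_inr hBu hFu hf hBd, Γc_warped_inl_inr_inl hBu hFu hf hBd,
    Γc_warped_inl_inr_inr hBu hFu hf hFd hfd, zero_mul, Finset.sum_const_zero, add_zero,
    zero_add]
  have hfib : ∑ i, ∑ j, -(f (basePt (γ u)) * gradVec gB f (basePt (γ u)) a * gF (fibPt (γ u)) i j)
        * vel γ u (Sum.inr i) * V u (Sum.inr j)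
      = -(f (basePt (γ u)) * sq gF (fibPt (γ u)) (vel (fibCurve γ) u) (fibCurve V u)
          * gradVec gB f (basePt (γ u)) a) := by
    simp only [sq, Finset.mul_sum, Finset.sum_mul, ← Finset.sum_neg_distrib]
    refine Finset.sum_congr rfl fun i _ => Finset.sum_congr rfl fun j _ => ?_
    simp only [vel, fibCurve, fibPt]
    ring
  rw [hfib, ← add_assoc, ← sub_eq_add_neg]
  rfl

lemma covD_vel_baseCurve_of_geodesicAt (hB : SmoothMetric gB) (hF : SmoothMetric gF)
    (hfd : DifferentiableAt ℝ f (basePt (γ u))) (hf : f (basePt (γ u)) ≠ 0)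
    (hgeo : GeodesicAt (warped gB gF f) γ u) (a : Fin d₁) :
    covD gB (baseCurve γ) (vel (baseCurve γ)) u a
      = f (basePt (γ u)) * sq gF (fibPt (γ u)) (vel (fibCurve γ) u) (vel (fibCurve γ) u)
        * gradVec gB f (basePt (γ u)) a :=
  sub_eq_zero.1 ((covD_warped_inl hB hF hfd hf (vel γ) a).symm.trans (hgeo (Sum.inl a)))

lemma sq_vel_baseCurve_of_null
    (hnull : sq (warped gB gF f) (γ u) (vel γ u) (vel γ u) = 0) :
    sq gB (basePt (γ u)) (vel (baseCurve γ) u) (vel (baseCurve γ) u)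
      = -(f (basePt (γ u)) ^ 2
        * sq gF (fibPt (γ u)) (vel (fibCurve γ) u) (vel (fibCurve γ) u)) :=
  eq_neg_of_add_eq_zero_left ((sq_warped _ _ _).symm.trans hnull)

end WarpedProduct

theorem base_projection_of_null_geodesic_general {d₁ d₂ : ℕ}
    {gB : (Fin d₁ → ℝ) → Matrix (Fin d₁) (Fin d₁) ℝ}
    {gF : (Fin d₂ → ℝ) → Matrix (Fin d₂) (Fin d₂) ℝ} {f : (Fin d₁ → ℝ) → ℝ}
    (hB : SmoothMetric gB) (hF : SmoothMetric gF) (hf : Differentiable ℝ f) (hfpos : ∀ y, 0 < f y)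
    {γ : ℝ → (Fin d₁ ⊕ Fin d₂) → ℝ} {u : ℝ} (_hγ : ∀ μ, ContDiffAt ℝ 2 (fun w => γ w μ) u)
    (hgeo : GeodesicAt (warped gB gF f) γ u)
    (hnull : sq (warped gB gF f) (γ u) (vel γ u) (vel γ u) = 0) {C : ℝ}
    (hC : sq gF (fibPt (γ u)) (vel (fibCurve γ) u) (vel (fibCurve γ) u)
      = C / f (basePt (γ u)) ^ 4) :
    (∀ a,
      covD gB (baseCurve γ) (vel (baseCurve γ)) u a
        = -sq gB (basePt (γ u)) (vel (baseCurve γ) u) (vel (baseCurve γ) u)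
          * gradVec gB (fun y => Real.log (f y)) (basePt (γ u)) a ∧
      covD gB (baseCurve γ) (vel (baseCurve γ)) u a
        = C / f (basePt (γ u)) ^ 3 * gradVec gB f (basePt (γ u)) a ∧
      covD gB (baseCurve γ) (vel (baseCurve γ)) u a
        = -(C / 2) * gradVec gB (fun y => 1 / f y ^ 2) (basePt (γ u)) a) ∧
    sq gB (basePt (γ u)) (vel (baseCurve γ) u) (vel (baseCurve γ) u)
      = -C / f (basePt (γ u)) ^ 2 := by
  have hfne := (hfpos (basePt (γ u))).ne'
  have hintegral : sq gB (basePt (γ u)) (vel (baseCurve γ) u) (vel (baseCurve γ) u)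
      = -C / f (basePt (γ u)) ^ 2 := by
    rw [sq_vel_baseCurve_of_null hnull, hC]
    field_simp
  have hacc (a : Fin d₁) : covD gB (baseCurve γ) (vel (baseCurve γ)) u a
      = C / f (basePt (γ u)) ^ 3 * gradVec gB f (basePt (γ u)) a := by
    rw [covD_vel_baseCurve_of_geodesicAt hB hF (hf _) hfne hgeo, hC]
    field_simp
  refine ⟨fun a => ⟨?_, hacc a, ?_⟩, hintegral⟩
  · rw [hacc, hintegral, gradVec_log gB (hf _) hfne]
    field_simp
  · rw [hacc, gradVec_one_div_sq gB (hf _) hfne]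
    field_simp

/-- Along any affinely parametrized null geodesic of the warped
product, the base projection satisfies the subgeodesic equation
`N̂^b∇̂_b N̂^a = −(ĝ(N̂,N̂)) ∇̂^a(ln f) = (C/f³) ∇̂^a f = −(C/2) ∇̂^a(1/f²)`,
with first integral `ĝ(N̂,N̂) = −C/f²`. -/
theorem base_projection_of_null_geodesic {n : ℕ}
    (gB : (Fin 4 → ℝ) → Matrix (Fin 4) (Fin 4) ℝ)
    (gF : (Fin n → ℝ) → Matrix (Fin n) (Fin n) ℝ)
    (f : (Fin 4 → ℝ) → ℝ)
    (hB : Lorentzian gB) (hF : Riemannian gF)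
    (hf : ContDiff ℝ (⊤ : ℕ∞) f) (hfpos : ∀ y, 0 < f y)
    (γ : ℝ → (Fin 4 ⊕ Fin n) → ℝ) (hγs : SmoothCurve γ)
    (hgeo : IsGeodesic (warped gB gF f) γ)
    (hnull : ∀ u, sq (warped gB gF f) (γ u) (vel γ u) (vel γ u) = 0)
    (C : ℝ) (hC0 : 0 ≤ C)
    (hC : ∀ u, sq gF (fibPt (γ u)) (vel (fibCurve γ) u) (vel (fibCurve γ) u)
        = C / (f (basePt (γ u))) ^ 4) :
    (∀ (u : ℝ) (a : Fin 4),
      (deriv (fun w => vel (baseCurve γ) w a) u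
          + ∑ b, ∑ c, Γc gB a b c (basePt (γ u)) * vel (baseCurve γ) u b * vel (baseCurve γ) u c
        = -(sq gB (basePt (γ u)) (vel (baseCurve γ) u) (vel (baseCurve γ) u))
            * (∑ b, ginv gB (basePt (γ u)) a b * pd (fun y => Real.log (f y)) b (basePt (γ u)))) ∧
      (deriv (fun w => vel (baseCurve γ) w a) u
          + ∑ b, ∑ c, Γc gB a b c (basePt (γ u)) * vel (baseCurve γ) u b * vel (baseCurve γ) u c
        = C / (f (basePt (γ u))) ^ 3
            * (∑ b, ginv gB (basePt (γ u)) a b * pd f b (basePt (γ u)))) ∧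
      (deriv (fun w => vel (baseCurve γ) w a) u
          + ∑ b, ∑ c, Γc gB a b c (basePt (γ u)) * vel (baseCurve γ) u b * vel (baseCurve γ) u c
        = -(C / 2)
            * (∑ b, ginv gB (basePt (γ u)) a b * pd (fun y => 1 / (f y) ^ 2) b (basePt (γ u))))) ∧
    (∀ u : ℝ, sq gB (basePt (γ u)) (vel (baseCurve γ) u) (vel (baseCurve γ) u)
        = -C / (f (basePt (γ u))) ^ 2) := by
  have hloc u := base_projection_of_null_geodesic_general hB.1 hF.1 (hf.differentiable (by simp))
    hfpos (fun μ => (hγs μ).contDiffAt.of_le (by norm_cast)) (hgeo u) (hnull u) (hC u)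
  exact ⟨fun u => (hloc u).1, fun u => (hloc u).2⟩

end Paper
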